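/- Let H be a nonzero complex Hilbert space and T a bounded operator on H with ‖T‖ < 1. Then the spectrum of the second quantization Γ(T) = ⊕_{n≥0} T^{⊗n} on the Fock space Γ(H) = ⊕_{n≥0} H^{⊗n} equals {1} ∪ closure( ⋃_{n≥1} { Π_{j=1}^n λ_j : λ_j ∈ σ(T) } ). -/

import Mathlib

open scoped InnerProductSpace

/-- An abstract presentation of the `n`-fold Hilbert tensor power of `H`:
a Hilbert space `Hn` together with a map `emb` sending `(x 1, …, x n)` to the
elementary tensor `x 1 ⊗ ⋯ ⊗ x n`, such that inner products of elementary
tensors multiply and the elementary tensors span a dense subspace. -/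
structure TensorPowerStructure (H Hn : Type*) [NormedAddCommGroup H]
    [InnerProductSpace ℂ H] [NormedAddCommGroup Hn] [InnerProductSpace ℂ Hn]
    (n : ℕ) where
  emb : (Fin n → H) → Hn
  inner_emb : ∀ x y : Fin n → H, ⟪emb x, emb y⟫_ℂ = ∏ i, ⟪x i, y i⟫_ℂ
  dense_span : Dense ((Submodule.span ℂ (Set.range emb) : Submodule ℂ Hn) : Set Hn)

/-- `Tn` is the `n`-fold tensor power `T^{⊗n}` of `T`, acting as `T` on each
factor of elementary tensors. -/
def IsTensorPowerOp {H Hn : Type*} [NormedAddCommGroup H] [InnerProductSpace ℂ H]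
    [NormedAddCommGroup Hn] [InnerProductSpace ℂ Hn] {n : ℕ}
    (tp : TensorPowerStructure H Hn n) (T : H →L[ℂ] H) (Tn : Hn →L[ℂ] Hn) : Prop :=
  ∀ x : Fin n → H, Tn (tp.emb x) = tp.emb fun i => T (x i)

/-
`Γ(T)` is the Hilbert sum of the powers `T^{⊗n}`, whose norms tend to zero, so the resolvents of
all but finitely many summands are uniformly bounded at each `z ≠ 0`; hence `σ(Γ(T))` is the closure
of `⋃ₙ σ(T^{⊗n})`. It remains to see that `σ(f₁ ⊗ ⋯ ⊗ fₙ) = σ(f₁) ⋯ σ(fₙ)` (Brown–Pearcy). The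
operator is the product of the commuting slot operators `1 ⊗ ⋯ ⊗ fⱼ ⊗ ⋯ ⊗ 1`. A character of their
double commutant, which is a commutative Banach algebra with the same spectra, gives `⊆`.
Conversely, each `lⱼ ∈ σ(fⱼ)` has approximate eigenvectors `xⱼ` for `fⱼ` or for its adjoint, and
`w = x₁ ⊗ ⋯ ⊗ xₙ` makes `⟪w, Q (f₁ ⊗ ⋯ ⊗ fₙ - l₁ ⋯ lₙ) w⟫` small whenever `Q` commutes with
the slot operators, as an inverse of `f₁ ⊗ ⋯ ⊗ fₙ - l₁ ⋯ lₙ` would.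
-/

theorem spectrum_coe_centralizer {R A : Type*} [CommRing R] [Ring A] [Algebra R A] {S : Set A}
    (x : Subalgebra.centralizer R S) : spectrum R x = spectrum R (x : A) := by
  refine Set.Subset.antisymm (fun z hz hunit => hz ?_)
    (AlgHom.spectrum_apply_subset (Subalgebra.centralizer R S).val x)
  have inv_mem : ∀ g ∈ S, g * ↑hunit.unit⁻¹ = ↑hunit.unit⁻¹ * g := fun g hg =>
    Commute.units_inv_right
      ((algebraMap R (Subalgebra.centralizer R S) z - x).2 g hg : Commute g hunit.unit)
  exact ⟨⟨_, ⟨_, inv_mem⟩, Subtype.ext hunit.mul_val_inv, Subtype.ext hunit.val_inv_mul⟩, rfl⟩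

theorem exists_prod_eq_of_mem_spectrum_noncommProd {ι A : Type*} [Fintype ι] [NormedRing A]
    [NormedAlgebra ℂ A] [CompleteSpace A] {a : ι → A}
    (hcomm : ((Finset.univ : Finset ι) : Set ι).Pairwise (Function.onFun Commute a)) {z : ℂ}
    (hz : z ∈ spectrum ℂ (Finset.univ.noncommProd a hcomm)) :
    ∃ l : ι → ℂ, (∀ i, l i ∈ spectrum ℂ (a i)) ∧ z = ∏ i, l i := by
  let C : Subalgebra ℂ A := Subalgebra.centralizer ℂ (Set.centralizer (Set.range a))
  have range_comm : ∀ x ∈ Set.range a, ∀ y ∈ Set.range a, x * y = y * x := by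
    rintro _ ⟨i, rfl⟩ _ ⟨j, rfl⟩
    exact hcomm.of_refl (Finset.mem_univ i) (Finset.mem_univ j)
  have C_comm : ∀ x y : C, x * y = y * x := fun x y =>
    Subtype.ext (Set.centralizer_centralizer_comm_of_comm range_comm _ x.2 _ y.2)
  have : CompleteSpace C := (Set.isClosed_centralizer _).completeSpace_coe
  let _ : NormedCommRing C := { (inferInstance : NormedRing C) with mul_comm := C_comm }
  let b : ι → C := fun i => ⟨a i, Set.subset_centralizer_centralizer ⟨i, rfl⟩⟩
  have coe_prod_b : ((∏ i, b i : C) : A) = Finset.univ.noncommProd a hcomm := by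
    rw [← Finset.noncommProd_eq_prod]
    exact Finset.map_noncommProd _ _ _ C.val
  rw [← coe_prod_b, ← spectrum_coe_centralizer,
    WeakDual.CharacterSpace.mem_spectrum_iff_exists] at hz
  obtain ⟨φ, rfl⟩ := hz
  refine ⟨fun i => φ (b i), fun i => ?_, map_prod φ b _⟩
  rw [← show (b i : A) = a i from rfl, ← spectrum_coe_centralizer]
  exact WeakDual.CharacterSpace.mem_spectrum_iff_exists.2 ⟨φ, rfl⟩

theorem norm_resolvent_le_of_norm_le_half {𝕜 A : Type*} [NormedField 𝕜] [NormedRing A]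
    [NormedAlgebra 𝕜 A] {a : A} {z : 𝕜} (hz : z ∈ resolventSet 𝕜 a) (ha : ‖a‖ ≤ ‖z‖ / 2) :
    ‖z‖ * ‖resolvent a z‖ ≤ 2 * ‖(1 : A)‖ := by
  have resolvent_identity : z • resolvent a z = 1 + a * resolvent a z := by
    have := Ring.mul_inverse_cancel _ hz
    rw [sub_mul, ← Algebra.smul_def] at this
    exact eq_add_of_sub_eq this
  have : ‖z‖ * ‖resolvent a z‖ ≤ ‖(1 : A)‖ + ‖z‖ / 2 * ‖resolvent a z‖ := calc
    ‖z‖ * ‖resolvent a z‖ = ‖1 + a * resolvent a z‖ := by rw [← norm_smul, resolvent_identity]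
    _ ≤ ‖(1 : A)‖ + ‖a‖ * ‖resolvent a z‖ := (norm_add_le _ _).trans (by grw [norm_mul_le])
    _ ≤ ‖(1 : A)‖ + ‖z‖ / 2 * ‖resolvent a z‖ := by gcongr
  linarith

theorem spectrum_subset_of_retract {𝕜 E F : Type*} [NontriviallyNormedField 𝕜]
    [NormedAddCommGroup E] [NormedSpace 𝕜 E] [NormedAddCommGroup F] [NormedSpace 𝕜 F]
    {A : E →L[𝕜] E} {G : F →L[𝕜] F} {J : E →L[𝕜] F} {P : F →L[𝕜] E}
    (hPJ : ∀ x, P (J x) = x) (hGJ : ∀ x, G (J x) = J (A x)) (hPG : ∀ v, P (G v) = A (P v)) :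
    spectrum 𝕜 A ⊆ spectrum 𝕜 G := by
  rintro z hz ⟨u, hu⟩
  have u_apply (v : F) : (u : F →L[𝕜] F) v = z • v - G v := by
    simp [hu, Algebra.algebraMap_eq_smul_one]
  have inv_u (v : F) : (↑u⁻¹ : F →L[𝕜] F) ((u : F →L[𝕜] F) v) = v := DFunLike.congr_fun u.inv_mul v
  have u_inv (v : F) : (u : F →L[𝕜] F) ((↑u⁻¹ : F →L[𝕜] F) v) = v := DFunLike.congr_fun u.mul_inv v
  refine hz ⟨⟨_, P ∘L (↑u⁻¹ : F →L[𝕜] F) ∘L J, ?_, ?_⟩, rfl⟩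
  · ext x
    have := congrArg P (u_inv (J x))
    simpa [Algebra.algebraMap_eq_smul_one, u_apply, hPG, hPJ] using this
  · ext x
    have := congrArg P (inv_u (J x))
    simpa [Algebra.algebraMap_eq_smul_one, u_apply, hGJ, hPJ] using this

theorem exists_eq_sum_of_mem_span_iUnion_range {ι 𝕜 F : Type*} [Semiring 𝕜] [AddCommMonoid F]
    [Module 𝕜 F] {E : ι → Type*} [∀ i, AddCommMonoid (E i)] [∀ i, Module 𝕜 (E i)]
    {J : ∀ i, E i →ₗ[𝕜] F} {v : F} (hv : v ∈ Submodule.span 𝕜 (⋃ i, Set.range (J i))) :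
    ∃ (s : Finset ι) (x : ∀ i, E i), v = ∑ i ∈ s, J i (x i) := by
  have hv' : v ∈ ⨆ i, (J i).range := by
    simpa only [Submodule.span_iUnion, ← LinearMap.coe_range, Submodule.span_eq] using hv
  obtain ⟨f, hf, rfl⟩ := Submodule.mem_iSup_iff_exists_finsupp _ _ |>.1 hv'
  choose x hx using hf
  exact ⟨f.support, x, Finset.sum_congr rfl fun i _ => (hx i).symm⟩

section HilbertSum

open Filter Topology NNReal

variable {ι 𝕜 F : Type*} [RCLike 𝕜] [NormedAddCommGroup F] [InnerProductSpace 𝕜 F]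
  {E : ι → Type*} [∀ i, NormedAddCommGroup (E i)] [∀ i, InnerProductSpace 𝕜 (E i)]
  {J : ∀ i, E i →ₗᵢ[𝕜] F} {G : F →L[𝕜] F} {A : ∀ i, E i →L[𝕜] E i}

theorem spectrum_summand_subset [CompleteSpace F] [∀ i, CompleteSpace (E i)]
    (hJ : OrthogonalFamily 𝕜 E J)
    (hdense : Dense (Submodule.span 𝕜 (⋃ i, Set.range (J i)) : Set F))
    (hG : ∀ i x, G (J i x) = J i (A i x)) (i : ι) : spectrum 𝕜 (A i) ⊆ spectrum 𝕜 G := by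
  let P : F →L[𝕜] E i := ContinuousLinearMap.adjoint (J i).toContinuousLinearMap
  have hPJ (x : E i) : P (J i x) = x := ext_inner_left 𝕜 fun y =>
    (ContinuousLinearMap.adjoint_inner_right _ _ _).trans ((J i).inner_map_map y x)
  have hPJ_ne {j : ι} (hij : i ≠ j) (x : E j) : P (J j x) = 0 := ext_inner_left 𝕜 fun y => by
    rw [ContinuousLinearMap.adjoint_inner_right, inner_zero_right]
    exact hJ hij y x
  have hPG : P ∘L G = A i ∘L P := by
    refine ContinuousLinearMap.ext_on hdense fun v hv => ?_
    obtain ⟨j, x, rfl⟩ := Set.mem_iUnion.1 hv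
    rcases eq_or_ne i j with rfl | hij
    · simp only [ContinuousLinearMap.comp_apply, hG, hPJ]
    · simp only [ContinuousLinearMap.comp_apply, hG, hPJ_ne hij, map_zero]
  exact spectrum_subset_of_retract (J := (J i).toContinuousLinearMap) (P := P) hPJ (hG i)
    (DFunLike.congr_fun hPG)

theorem norm_le_mul_norm_of_forall_summand (hJ : OrthogonalFamily 𝕜 E J)
    (hdense : Dense (Submodule.span 𝕜 (⋃ i, Set.range (J i)) : Set F))
    (hG : ∀ i x, G (J i x) = J i (A i x)) {K : ℝ≥0} (hK : ∀ i x, ‖x‖ ≤ K * ‖A i x‖) (v : F) :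
    ‖v‖ ≤ K * ‖G v‖ := by
  refine hdense.induction (P := fun v => ‖v‖ ≤ K * ‖G v‖) (fun v hv => ?_)
    (isClosed_le (by fun_prop) (by fun_prop)) v
  obtain ⟨s, x, rfl⟩ :=
    exists_eq_sum_of_mem_span_iUnion_range (J := fun i => (J i).toLinearMap) hv
  simp only [LinearIsometry.coe_toLinearMap, map_sum, hG]
  refine le_of_sq_le_sq ?_ (by positivity)
  calc ‖∑ i ∈ s, J i (x i)‖ ^ 2 = ∑ i ∈ s, ‖x i‖ ^ 2 := hJ.norm_sum x s
    _ ≤ ∑ i ∈ s, (K * ‖A i (x i)‖) ^ 2 := by gcongr with i; exact hK i (x i)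
    _ = (K * ‖∑ i ∈ s, J i (A i (x i))‖) ^ 2 := by
      simp only [mul_pow, hJ.norm_sum (fun i => A i (x i)) s, Finset.mul_sum]

theorem isUnit_of_forall_summand_isUnit [CompleteSpace F] (hJ : OrthogonalFamily 𝕜 E J)
    (hdense : Dense (Submodule.span 𝕜 (⋃ i, Set.range (J i)) : Set F))
    (hG : ∀ i x, G (J i x) = J i (A i x)) (hA : ∀ i, IsUnit (A i))
    (hbdd : BddAbove (Set.range fun i => ‖Ring.inverse (A i)‖)) : IsUnit G := by
  obtain ⟨K, hK⟩ := hbdd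
  have inverse_apply (i : ι) (x : E i) : Ring.inverse (A i) (A i x) = x :=
    DFunLike.congr_fun (Ring.inverse_mul_cancel _ (hA i)) x
  have apply_inverse (i : ι) (x : E i) : A i (Ring.inverse (A i) x) = x :=
    DFunLike.congr_fun (Ring.mul_inverse_cancel _ (hA i)) x
  have norm_le (i : ι) (x : E i) : ‖x‖ ≤ K.toNNReal * ‖A i x‖ := calc
    ‖x‖ = ‖Ring.inverse (A i) (A i x)‖ := by rw [inverse_apply]
    _ ≤ K.toNNReal * ‖A i x‖ := ContinuousLinearMap.le_of_opNorm_le _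
      ((hK ⟨i, rfl⟩).trans (Real.le_coe_toNNReal K)) _
  rw [ContinuousLinearMap.isUnit_iff_bijective,
    ContinuousLinearMap.bijective_iff_dense_range_and_antilipschitz]
  refine ⟨?_, K.toNNReal, G.antilipschitz_of_bound
    (norm_le_mul_norm_of_forall_summand hJ hdense hG norm_le)⟩
  rw [← Submodule.dense_iff_topologicalClosure_eq_top]
  refine hdense.mono (Submodule.span_le.2 (Set.iUnion_subset fun i => ?_))
  rintro _ ⟨x, rfl⟩
  exact ⟨J i (Ring.inverse (A i) x), (hG i _).trans (by rw [apply_inverse])⟩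

theorem spectrum_hilbertSum_subset_insert_zero_iUnion [CompleteSpace F]
    (hJ : OrthogonalFamily 𝕜 E J)
    (hdense : Dense (Submodule.span 𝕜 (⋃ i, Set.range (J i)) : Set F))
    (hG : ∀ i x, G (J i x) = J i (A i x)) (hA : Tendsto (fun i => ‖A i‖) cofinite (𝓝 0)) :
    spectrum 𝕜 G ⊆ insert 0 (⋃ i, spectrum 𝕜 (A i)) := by
  intro z hz
  by_contra hz'
  simp only [Set.mem_insert_iff, Set.mem_iUnion, not_or, not_exists] at hz'
  obtain ⟨hz0, hzA⟩ := hz'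
  have norm_resolvent_le : ∀ᶠ i in cofinite, ‖resolvent (A i) z‖ ≤ 2 / ‖z‖ := by
    filter_upwards [hA.eventually_le_const (half_pos (norm_pos_iff.2 hz0))] with i hi
    rw [le_div_iff₀' (norm_pos_iff.2 hz0)]
    have norm_one_le : ‖(1 : E i →L[𝕜] E i)‖ ≤ 1 := ContinuousLinearMap.norm_id_le
    linarith [norm_resolvent_le_of_norm_le_half (spectrum.notMem_iff.1 (hzA i)) hi]
  refine hz (isUnit_of_forall_summand_isUnit (A := fun i => algebraMap 𝕜 _ z - A i) hJ hdense
    (fun i x => ?_) (fun i => spectrum.notMem_iff.1 (hzA i))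
    (IsBoundedUnder.bddAbove_range_of_cofinite ⟨_, norm_resolvent_le⟩))
  simp [Algebra.algebraMap_eq_smul_one, hG]

end HilbertSum

open Filter Topology in
theorem spectrum_hilbertSum_eq_closure_iUnion {ι F : Type*} [Infinite ι] [NormedAddCommGroup F]
    [InnerProductSpace ℂ F] [CompleteSpace F] {E : ι → Type*} [∀ i, NormedAddCommGroup (E i)]
    [∀ i, InnerProductSpace ℂ (E i)] [∀ i, CompleteSpace (E i)] [∀ i, Nontrivial (E i)]
    {J : ∀ i, E i →ₗᵢ[ℂ] F} {G : F →L[ℂ] F} {A : ∀ i, E i →L[ℂ] E i}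
    (hJ : OrthogonalFamily ℂ E J)
    (hdense : Dense (Submodule.span ℂ (⋃ i, Set.range (J i)) : Set F))
    (hG : ∀ i x, G (J i x) = J i (A i x)) (hA : Tendsto (fun i => ‖A i‖) cofinite (𝓝 0)) :
    spectrum ℂ G = closure (⋃ i, spectrum ℂ (A i)) := by
  have zero_mem : (0 : ℂ) ∈ closure (⋃ i, spectrum ℂ (A i)) := by
    choose l hl using fun i => spectrum.nonempty (A i)
    have l_tendsto : Tendsto l cofinite (𝓝 0) :=
      squeeze_zero_norm (fun i => spectrum.norm_le_norm_of_mem (hl i)) hA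
    exact mem_closure_of_tendsto l_tendsto (.of_forall fun i => Set.mem_iUnion_of_mem i (hl i))
  refine Set.Subset.antisymm ?_ (closure_minimal ?_ (spectrum.isClosed G))
  · exact (spectrum_hilbertSum_subset_insert_zero_iUnion hJ hdense hG hA).trans
      (Set.insert_subset zero_mem subset_closure)
  · exact Set.iUnion_subset (spectrum_summand_subset hJ hdense hG)

section ApproximateEigenvectors

open Filter Topology ContinuousLinearMap

variable {𝕜 E F : Type*} [RCLike 𝕜] [NormedAddCommGroup E]

theorem exists_norm_eq_one_tendsto_zero_of_not_antilipschitz [NormedSpace 𝕜 E]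
    [NormedAddCommGroup F] [NormedSpace 𝕜 F] {B : E →L[𝕜] F} (hB : ¬ ∃ K, AntilipschitzWith K B) :
    ∃ x : ℕ → E, (∀ k, ‖x k‖ = 1) ∧ Tendsto (fun k => B (x k)) atTop (𝓝 0) := by
  have exists_norm_le (k : ℕ) : ∃ x : E, ‖x‖ = 1 ∧ ‖B x‖ ≤ 1 / ((k : ℝ) + 1) := by
    by_contra! hk
    refine hB ⟨k + 1, B.antilipschitz_of_bound fun x => ?_⟩
    rcases eq_or_ne x 0 with rfl | hx
    · simp
    have := hk _ (norm_smul_inv_norm (𝕜 := 𝕜) hx)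
    have hx' : 0 < ‖x‖ := norm_pos_iff.2 hx
    rw [map_smul, norm_smul, norm_inv, RCLike.norm_coe_norm, ← div_eq_inv_mul,
      div_lt_div_iff₀ (by positivity) hx'] at this
    push_cast
    linarith
  choose x hx hBx using exists_norm_le
  exact ⟨x, hx, squeeze_zero_norm hBx tendsto_one_div_add_atTop_nhds_zero_nat⟩

variable [InnerProductSpace 𝕜 E]

theorem isUnit_of_antilipschitz_of_antilipschitz_adjoint [CompleteSpace E] {B : E →L[𝕜] E}
    (hB : ∃ K, AntilipschitzWith K B) (hB' : ∃ K, AntilipschitzWith K (adjoint B)) :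
    IsUnit B := by
  obtain ⟨K, hK⟩ := hB'
  rw [isUnit_iff_bijective, bijective_iff_dense_range_and_antilipschitz]
  refine ⟨?_, hB⟩
  rw [Submodule.topologicalClosure_eq_top_iff, orthogonal_range]
  exact LinearMap.ker_eq_bot.2 hK.injective

theorem exists_approx_eigenvector_of_mem_spectrum [CompleteSpace E] {T : E →L[𝕜] E} {l : 𝕜}
    (hl : l ∈ spectrum 𝕜 T) :
    ∃ x : ℕ → E, (∀ k, ‖x k‖ = 1) ∧
      (Tendsto (fun k => T (x k) - l • x k) atTop (𝓝 0) ∨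
        Tendsto (fun k => adjoint T (x k) - star l • x k) atTop (𝓝 0)) := by
  have sub_apply (x : E) : (T - algebraMap 𝕜 _ l) x = T x - l • x := by
    simp [Algebra.algebraMap_eq_smul_one]
  have adjoint_sub_apply (x : E) :
      adjoint (T - algebraMap 𝕜 _ l) x = adjoint T x - star l • x := by
    simp [Algebra.algebraMap_eq_smul_one, ← star_eq_adjoint]
  have not_isUnit : ¬ IsUnit (T - algebraMap 𝕜 _ l) := by rwa [IsUnit.sub_iff]
  by_cases hT : ∃ K, AntilipschitzWith K (T - algebraMap 𝕜 (E →L[𝕜] E) l)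
  · obtain ⟨x, hx, hlim⟩ := exists_norm_eq_one_tendsto_zero_of_not_antilipschitz
      (not_isUnit <| isUnit_of_antilipschitz_of_antilipschitz_adjoint hT ·)
    exact ⟨x, hx, .inr (by simpa only [adjoint_sub_apply] using hlim)⟩
  · obtain ⟨x, hx, hlim⟩ := exists_norm_eq_one_tendsto_zero_of_not_antilipschitz hT
    exact ⟨x, hx, .inl (by simpa only [sub_apply] using hlim)⟩

/-- `w` is a sequence of approximate eigenvectors of `T` for `l` in the weak sense that
`⟪w, Q (T - l) w⟫` tends to zero for each `Q` commuting with `T`. On unit vectors this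
covers approximate eigenvectors of `T` and of its adjoint alike, and it still detects points of
the spectrum, on taking `Q` to be a hypothetical inverse. -/
def IsWeakApproxEigenvector (T : E →L[𝕜] E) (l : 𝕜) (w : ℕ → E) : Prop :=
  ∀ Q : E →L[𝕜] E, Commute Q T → Tendsto (fun k => ⟪w k, Q (T (w k) - l • w k)⟫_𝕜) atTop (𝓝 0)

namespace IsWeakApproxEigenvector

variable {T : E →L[𝕜] E} {l : 𝕜} {w : ℕ → E}

theorem of_tendsto (hw : ∀ k, ‖w k‖ = 1)
    (h : Tendsto (fun k => T (w k) - l • w k) atTop (𝓝 0)) : IsWeakApproxEigenvector T l w := by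
  intro Q _
  refine squeeze_zero_norm (fun k => ?_) (by simpa using h.norm.const_mul ‖Q‖)
  calc ‖⟪w k, Q (T (w k) - l • w k)⟫_𝕜‖ ≤ ‖w k‖ * ‖Q (T (w k) - l • w k)‖ := norm_inner_le_norm _ _
    _ ≤ ‖Q‖ * ‖T (w k) - l • w k‖ := by rw [hw, one_mul]; exact Q.le_opNorm _

theorem of_tendsto_adjoint [CompleteSpace E] (hw : ∀ k, ‖w k‖ = 1)
    (h : Tendsto (fun k => adjoint T (w k) - star l • w k) atTop (𝓝 0)) :
    IsWeakApproxEigenvector T l w := by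
  intro Q hQ
  have inner_eq (k : ℕ) :
      ⟪w k, Q (T (w k) - l • w k)⟫_𝕜 = ⟪adjoint T (w k) - star l • w k, Q (w k)⟫_𝕜 := by
    have : Q (T (w k)) = T (Q (w k)) := DFunLike.congr_fun hQ.eq (w k)
    simp [this, inner_sub_left, inner_sub_right, inner_smul_left, inner_smul_right,
      adjoint_inner_left]
  refine squeeze_zero_norm (fun k => ?_) (by simpa using h.norm.mul_const ‖Q‖)
  calc ‖⟪w k, Q (T (w k) - l • w k)⟫_𝕜‖
      ≤ ‖adjoint T (w k) - star l • w k‖ * ‖Q (w k)‖ := by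
        rw [inner_eq]; exact norm_inner_le_norm _ _
    _ ≤ ‖adjoint T (w k) - star l • w k‖ * ‖Q‖ := by
        grw [Q.le_opNorm (w k), hw, mul_one]

variable {ι : Type*} {s : Finset ι} {a : ι → E →L[𝕜] E} {c : ι → 𝕜}

theorem tendsto_inner_noncommProd
    (hcomm : (s : Set ι).Pairwise (Function.onFun Commute a))
    (ha : ∀ i ∈ s, IsWeakApproxEigenvector (a i) (c i) w)
    {Q : E →L[𝕜] E} (hQ : ∀ i ∈ s, Commute Q (a i)) :
    Tendsto (fun k => ⟪w k, Q (s.noncommProd a hcomm (w k) - (∏ i ∈ s, c i) • w k)⟫_𝕜)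
      atTop (𝓝 0) := by
  classical
  induction s using Finset.induction_on with
  | empty => simp
  | insert j s hj ih =>
    simp only [Finset.forall_mem_insert] at ha hQ
    have hcomm' := hcomm.mono (Finset.coe_subset.2 (s.subset_insert j))
    set P := s.noncommProd a hcomm' with hP
    have commute_P : Commute P (a j) := by
      refine (Finset.noncommProd_commute _ _ _ _ fun i hi => ?_).symm
      exact hcomm (s.mem_insert_self j) (Finset.mem_insert_of_mem hi)
        (ne_of_mem_of_not_mem hi hj).symm
    have telescope (k : ℕ) :
        Q ((insert j s).noncommProd a hcomm (w k) - (∏ i ∈ insert j s, c i) • w k) =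
          (Q * P) (a j (w k) - c j • w k) + c j • Q (P (w k) - (∏ i ∈ s, c i) • w k) := by
      have : a j (P (w k)) = P (a j (w k)) := (DFunLike.congr_fun commute_P.eq (w k)).symm
      rw [Finset.noncommProd_insert_of_notMem _ _ _ _ hj, Finset.prod_insert hj,
        mul_apply_eq_comp, ← hP, this]
      simp [mul_smul, smul_sub]
    simp only [telescope, inner_add_right, inner_smul_right]
    simpa using (ha.1 (Q * P) (hQ.1.mul_left commute_P)).add
      ((ih hcomm' ha.2 hQ.2).const_mul (c j))

theorem prod_mem_spectrum_noncommProd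
    (hcomm : (s : Set ι).Pairwise (Function.onFun Commute a))
    (ha : ∀ i ∈ s, IsWeakApproxEigenvector (a i) (c i) w) (hw : ∀ k, ‖w k‖ = 1) :
    ∏ i ∈ s, c i ∈ spectrum 𝕜 (s.noncommProd a hcomm) := by
  rintro ⟨u, hu⟩
  have commute_inv (i : ι) (hi : i ∈ s) : Commute (↑u⁻¹ : E →L[𝕜] E) (a i) := by
    refine Commute.units_inv_left ?_
    rw [hu]
    refine Commute.sub_left (Algebra.commutes _ _) ?_
    exact (Finset.noncommProd_commute _ _ _ _ fun j hj => hcomm.of_refl hi hj).symm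
  have inner_eq (k : ℕ) : ⟪w k, (↑u⁻¹ : E →L[𝕜] E)
      (s.noncommProd a hcomm (w k) - (∏ i ∈ s, c i) • w k)⟫_𝕜 = -1 := by
    have : s.noncommProd a hcomm (w k) - (∏ i ∈ s, c i) • w k = -(u : E →L[𝕜] E) (w k) := by
      simp [hu, Algebra.algebraMap_eq_smul_one]
    rw [this, map_neg, ← mul_apply_eq_comp, u.inv_mul, one_apply_eq_self, inner_neg_right,
      inner_self_eq_one_of_norm_eq_one (hw k)]
  have := tendsto_inner_noncommProd hcomm ha commute_inv
  simp only [inner_eq] at this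
  simpa using tendsto_nhds_unique this tendsto_const_nhds

end IsWeakApproxEigenvector

end ApproximateEigenvectors

section Gram

open scoped ComplexOrder Matrix

variable {𝕜 κ : Type*} [RCLike 𝕜]

theorem norm_sum_smul_le_of_posSemidef_gram_sub [Fintype κ] {E F : Type*}
    [NormedAddCommGroup E] [InnerProductSpace 𝕜 E] [NormedAddCommGroup F] [InnerProductSpace 𝕜 F]
    {v : κ → E} {w : κ → F} {C : ℝ} (hC : 0 ≤ C)
    (h : (C ^ 2 • Matrix.gram 𝕜 v - Matrix.gram 𝕜 w).PosSemidef) (c : κ → 𝕜) :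
    ‖∑ a, c a • w a‖ ≤ C * ‖∑ a, c a • v a‖ := by
  have := h.re_dotProduct_nonneg c
  simp only [Matrix.sub_mulVec, Matrix.smul_mulVec, dotProduct_sub, dotProduct_smul,
    Matrix.star_dotProduct_gram_mulVec, map_sub, RCLike.smul_re, inner_self_eq_norm_sq] at this
  refine le_of_sq_le_sq ?_ (by positivity)
  linarith

variable [Finite κ]

theorem posSemidef_of_prod {ι : Type*} {s : Finset ι} {A : ι → Matrix κ κ 𝕜}
    (hA : ∀ i ∈ s, (A i).PosSemidef) :
    (Matrix.of fun a b => ∏ i ∈ s, A i a b).PosSemidef := by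
  classical
  induction s using Finset.induction_on with
  | empty => simpa [Matrix.vecMulVec] using! Matrix.posSemidef_vecMulVec_self_star (1 : κ → 𝕜)
  | insert i s his ih =>
    simp only [Finset.prod_insert his]
    exact (hA i (s.mem_insert_self i)).hadamard
      (ih fun j hj => hA j (Finset.mem_insert_of_mem hj))

theorem posSemidef_of_prod_sub_of_prod {ι : Type*} {s : Finset ι} {A B : ι → Matrix κ κ 𝕜}
    (hB : ∀ i ∈ s, (B i).PosSemidef) (hAB : ∀ i ∈ s, (A i - B i).PosSemidef) :
    (Matrix.of (fun a b => ∏ i ∈ s, A i a b) -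
      Matrix.of fun a b => ∏ i ∈ s, B i a b).PosSemidef := by
  classical
  induction s using Finset.induction_on with
  | empty => simpa using Matrix.PosSemidef.zero
  | insert i s his ih =>
    simp only [Finset.forall_mem_insert] at hB hAB
    have hAi : (A i).PosSemidef := by simpa using hAB.1.add hB.1
    have split : (Matrix.of (fun a b => ∏ j ∈ insert i s, A j a b) -
        Matrix.of fun a b => ∏ j ∈ insert i s, B j a b) =
        (A i - B i) ⊙ (Matrix.of fun a b => ∏ j ∈ s, B j a b) +
          A i ⊙ (Matrix.of (fun a b => ∏ j ∈ s, A j a b) -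
            Matrix.of fun a b => ∏ j ∈ s, B j a b) := by
      ext a b
      simp only [Finset.prod_insert his, Matrix.sub_apply, Matrix.add_apply,
        Matrix.hadamard_apply, Matrix.of_apply]
      ring
    rw [split]
    exact (hAB.1.hadamard (posSemidef_of_prod hB.2)).add (hAi.hadamard (ih hB.2 hAB.2))

end Gram

namespace TensorPowerStructure

variable {H Hn : Type*} [NormedAddCommGroup H] [InnerProductSpace ℂ H]
  [NormedAddCommGroup Hn] [InnerProductSpace ℂ Hn] {n : ℕ} (tp : TensorPowerStructure H Hn n)

theorem norm_emb (x : Fin n → H) : ‖tp.emb x‖ = ∏ i, ‖x i‖ := by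
  have norm_sq : ‖tp.emb x‖ ^ 2 = (∏ i, ‖x i‖) ^ 2 := by
    rw [← Finset.prod_pow]
    have := tp.inner_emb x x
    simp only [inner_self_eq_norm_sq_to_K] at this
    exact_mod_cast this
  exact (sq_eq_sq₀ (norm_nonneg _) (by positivity)).1 norm_sq

theorem ext_clm {E : Type*} [NormedAddCommGroup E] [NormedSpace ℂ E] {A B : Hn →L[ℂ] E}
    (h : ∀ x, A (tp.emb x) = B (tp.emb x)) : A = B :=
  ContinuousLinearMap.ext_on tp.dense_span (Set.forall_mem_range.2 h)

theorem ext_inner_emb {u v : Hn} (h : ∀ y, ⟪tp.emb y, u⟫_ℂ = ⟪tp.emb y, v⟫_ℂ) : u = v :=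
  (innerSL_inj (𝕜 := ℂ)).1 <| tp.ext_clm fun y => by
    simpa only [innerSL_apply_apply, inner_conj_symm] using congrArg (starRingEnd ℂ) (h y)

/-- The multilinear form `x ↦ ⟪y₁, x₁⟫ ⋯ ⟪yₙ, xₙ⟫`; since elementary tensors are separated by their
inner products, its multilinearity gives that of `emb`. -/
noncomputable def innerEmb (y : Fin n → H) : MultilinearMap ℂ (fun _ : Fin n => H) ℂ :=
  (MultilinearMap.mkPiAlgebra ℂ (Fin n) ℂ).compLinearMap fun i => innerₛₗ ℂ (y i)

theorem inner_emb_eq_innerEmb (x y : Fin n → H) : ⟪tp.emb y, tp.emb x⟫_ℂ = innerEmb y x := by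
  simp [innerEmb, tp.inner_emb]

theorem emb_update_add (x : Fin n → H) (j : Fin n) (u v : H) :
    tp.emb (Function.update x j (u + v)) =
      tp.emb (Function.update x j u) + tp.emb (Function.update x j v) :=
  tp.ext_inner_emb fun y => by
    simp only [inner_add_right, inner_emb_eq_innerEmb, MultilinearMap.map_update_add]

theorem emb_update_smul (x : Fin n → H) (j : Fin n) (c : ℂ) (u : H) :
    tp.emb (Function.update x j (c • u)) = c • tp.emb (Function.update x j u) :=
  tp.ext_inner_emb fun y => by
    simp only [inner_smul_right, inner_emb_eq_innerEmb, MultilinearMap.map_update_smul, smul_eq_mul]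

theorem nontrivial [Nontrivial H] (tp : TensorPowerStructure H Hn n) : Nontrivial Hn := by
  obtain ⟨x, hx⟩ := exists_ne (0 : H)
  refine ⟨tp.emb fun _ => x, 0, norm_ne_zero_iff.1 ?_⟩
  simp [norm_emb, hx]

-- Each `‖f i‖² • gram (x i) - gram (f i (x i))` is positive semidefinite; by the Schur product
-- theorem the same comparison holds between the entrywise products over `i`, which are the Gram
-- matrices of the elementary tensors.
theorem norm_linearCombination_emb_le (f : Fin n → H →L[ℂ] H) (c : (Fin n → H) →₀ ℂ) :
    ‖Finsupp.linearCombination ℂ (fun x => tp.emb fun i => f i (x i)) c‖ ≤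
      (∏ i, ‖f i‖) * ‖Finsupp.linearCombination ℂ tp.emb c‖ := by
  simp only [Finsupp.linearCombination_apply, Finsupp.sum, ← Finset.sum_coe_sort c.support]
  refine norm_sum_smul_le_of_posSemidef_gram_sub (by positivity) ?_ _
  convert posSemidef_of_prod_sub_of_prod (s := Finset.univ)
    (fun i _ => Matrix.posSemidef_gram ℂ fun x : c.support => f i (x.1 i))
    (fun i _ => Matrix.posSemidef_opNorm_smul_gram_sub_gram (𝕜 := ℂ)
      (fun x : c.support => x.1 i) (f i)) using 1
  ext x y
  simp [tp.inner_emb, Finset.prod_mul_distrib, Finset.prod_pow]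

theorem denseRange_linearCombination_emb :
    DenseRange (Finsupp.linearCombination ℂ tp.emb) := by
  rw [DenseRange, ← LinearMap.coe_range, Finsupp.range_linearCombination]
  exact tp.dense_span

variable [CompleteSpace Hn]

/-- The tensor product `f₁ ⊗ ⋯ ⊗ fₙ` of bounded operators, extended by continuity from the span of
the elementary tensors. -/
noncomputable def map (f : Fin n → H →L[ℂ] H) : Hn →L[ℂ] Hn :=
  (Finsupp.linearCombination ℂ fun x => tp.emb fun i => f i (x i)).extendOfNorm
    (Finsupp.linearCombination ℂ tp.emb)

theorem map_emb (f : Fin n → H →L[ℂ] H) (x : Fin n → H) :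
    tp.map f (tp.emb x) = tp.emb fun i => f i (x i) := by
  simpa [map] using LinearMap.extendOfNorm_eq tp.denseRange_linearCombination_emb
    ⟨_, tp.norm_linearCombination_emb_le f⟩ (Finsupp.single x 1)

theorem norm_map_le (f : Fin n → H →L[ℂ] H) : ‖tp.map f‖ ≤ ∏ i, ‖f i‖ :=
  LinearMap.opNorm_extendOfNorm_le tp.denseRange_linearCombination_emb (by positivity)
    (tp.norm_linearCombination_emb_le f)

theorem map_one : tp.map (1 : Fin n → H →L[ℂ] H) = 1 :=
  tp.ext_clm fun x => by simp [map_emb]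

theorem map_mul (f g : Fin n → H →L[ℂ] H) : tp.map (f * g) = tp.map f * tp.map g :=
  tp.ext_clm fun x => by simp [map_emb]

/-- The tensor product of operators, as a multiplicative map on families of operators. -/
noncomputable def mapHom : (Fin n → H →L[ℂ] H) →* (Hn →L[ℂ] Hn) where
  toFun := tp.map
  map_one' := tp.map_one
  map_mul' := tp.map_mul

theorem eq_map_of_isTensorPowerOp {T : H →L[ℂ] H} {Tn : Hn →L[ℂ] Hn}
    (h : IsTensorPowerOp tp T Tn) : Tn = tp.map fun _ => T :=
  tp.ext_clm fun x => by rw [h x, map_emb]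

theorem map_mulSingle_emb (j : Fin n) (S : H →L[ℂ] H) (x : Fin n → H) :
    tp.map (Pi.mulSingle j S) (tp.emb x) = tp.emb (Function.update x j (S (x j))) := by
  rw [map_emb]
  congr 1
  ext1 i
  rcases eq_or_ne i j with rfl | hij
  · simp
  · simp [hij]

/-- The slot operators `1 ⊗ ⋯ ⊗ S ⊗ ⋯ ⊗ 1`, with `S` acting on the `j`-th tensor factor, as an
algebra homomorphism in `S`. -/
noncomputable def slot (j : Fin n) : (H →L[ℂ] H) →ₐ[ℂ] (Hn →L[ℂ] Hn) :=
  .ofLinearMap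
    { toFun S := tp.map (Pi.mulSingle j S)
      map_add' S S' := tp.ext_clm fun x => by simp [map_mulSingle_emb, emb_update_add]
      map_smul' c S := tp.ext_clm fun x => by simp [map_mulSingle_emb, emb_update_smul] }
    (by simp [map_one])
    (fun S S' => by simp [Pi.mulSingle_mul, map_mul])

theorem slot_emb (j : Fin n) (S : H →L[ℂ] H) (x : Fin n → H) :
    tp.slot j S (tp.emb x) = tp.emb (Function.update x j (S (x j))) :=
  tp.map_mulSingle_emb j S x

theorem pairwise_commute_slot (f : Fin n → H →L[ℂ] H) :
    ((Finset.univ : Finset (Fin n)) : Set (Fin n)).Pairwise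
      (Function.onFun Commute fun j => tp.slot j (f j)) :=
  fun i _ j _ _ => (Pi.mulSingle_apply_commute f i j).map tp.mapHom

theorem noncommProd_slot (f : Fin n → H →L[ℂ] H) :
    Finset.univ.noncommProd (fun j => tp.slot j (f j)) (tp.pairwise_commute_slot f) =
      tp.map f := by
  conv_rhs => rw [← Finset.noncommProd_mulSingle f]
  exact (Finset.map_noncommProd _ _ _ tp.mapHom).symm

theorem adjoint_map [CompleteSpace H] (f : Fin n → H →L[ℂ] H) :
    ContinuousLinearMap.adjoint (tp.map f) =
      tp.map fun i => ContinuousLinearMap.adjoint (f i) := by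
  refine tp.ext_clm fun x => tp.ext_inner_emb fun y => ?_
  simp only [ContinuousLinearMap.adjoint_inner_right, map_emb, tp.inner_emb]

theorem adjoint_slot [CompleteSpace H] (j : Fin n) (S : H →L[ℂ] H) :
    ContinuousLinearMap.adjoint (tp.slot j S) = tp.slot j (ContinuousLinearMap.adjoint S) :=
  (tp.adjoint_map _).trans <| congrArg tp.map <| funext fun i =>
    Pi.apply_mulSingle (fun _ => ContinuousLinearMap.adjoint) (fun _ => star_one _) j S i

theorem norm_slot_emb_sub_smul (j : Fin n) (S : H →L[ℂ] H) (c : ℂ) {x : Fin n → H}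
    (hx : ∀ i, ‖x i‖ = 1) : ‖tp.slot j S (tp.emb x) - c • tp.emb x‖ = ‖S (x j) - c • x j‖ := by
  have slot_sub_smul : tp.slot j S (tp.emb x) - c • tp.emb x =
      tp.emb (Function.update x j (S (x j) - c • x j)) := by
    simpa [Algebra.algebraMap_eq_smul_one] using tp.slot_emb j (S - algebraMap ℂ _ c) x
  rw [slot_sub_smul, norm_emb, Fintype.prod_eq_single j fun i hi => by simp [hi, hx],
    Function.update_self]

section Spectrum

open Filter Topology

variable [CompleteSpace H]

theorem isWeakApproxEigenvector_slot {j : Fin n} {S : H →L[ℂ] H} {c : ℂ} {x : Fin n → ℕ → H}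
    (hx : ∀ i k, ‖x i k‖ = 1)
    (h : Tendsto (fun k => S (x j k) - c • x j k) atTop (𝓝 0) ∨
      Tendsto (fun k => ContinuousLinearMap.adjoint S (x j k) - star c • x j k) atTop (𝓝 0)) :
    IsWeakApproxEigenvector (tp.slot j S) c fun k => tp.emb fun i => x i k := by
  have norm_emb_eq_one (k : ℕ) : ‖tp.emb fun i => x i k‖ = 1 := by simp [norm_emb, hx]
  rcases h with h | h
  · refine .of_tendsto norm_emb_eq_one (tendsto_zero_iff_norm_tendsto_zero.2 ?_)
    simpa only [tp.norm_slot_emb_sub_smul j S c (hx · _), norm_zero] using h.norm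
  · refine .of_tendsto_adjoint norm_emb_eq_one (tendsto_zero_iff_norm_tendsto_zero.2 ?_)
    simpa only [adjoint_slot, tp.norm_slot_emb_sub_smul j _ (star c) (hx · _), norm_zero] using
      h.norm

theorem spectrum_map (f : Fin n → H →L[ℂ] H) :
    spectrum ℂ (tp.map f) =
      {z | ∃ l : Fin n → ℂ, (∀ j, l j ∈ spectrum ℂ (f j)) ∧ z = ∏ j, l j} := by
  rw [← noncommProd_slot]
  refine Set.Subset.antisymm (fun z hz => ?_) ?_
  · obtain ⟨l, hl, hzl⟩ := exists_prod_eq_of_mem_spectrum_noncommProd _ hz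
    exact ⟨l, fun j => AlgHom.spectrum_apply_subset (tp.slot j) (f j) (hl j), hzl⟩
  · rintro _ ⟨l, hl, rfl⟩
    choose x hx hlim using fun j => exists_approx_eigenvector_of_mem_spectrum (hl j)
    exact IsWeakApproxEigenvector.prod_mem_spectrum_noncommProd _
      (fun j _ => tp.isWeakApproxEigenvector_slot hx (hlim j)) fun k => by simp [norm_emb, hx]

end Spectrum

end TensorPowerStructure

/-- Spectrum of the second quantization.  Let `H` be a nonzero complex Hilbert
space, `Hn n` the `n`-fold Hilbert tensor powers of `H`, and let `F` (the Fock
space `Γ(H) = ⊕ₙ H^{⊗n}`) be presented by isometries `J n : Hn n → F` with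
mutually orthogonal ranges whose union spans a dense subspace.  If `‖T‖ < 1`,
`Tn n = T^{⊗n}`, and `G = Γ(T)` is the bounded operator with `G (J n x) = J n (Tn n x)`,
then `σ(Γ(T)) = {1} ∪ closure( ⋃_{n≥1} { λ₁⋯λₙ : λⱼ ∈ σ(T) } )`. -/
theorem spectrum_secondQuantization
    {H F : Type*} [NormedAddCommGroup H] [InnerProductSpace ℂ H] [CompleteSpace H]
    [Nontrivial H]
    [NormedAddCommGroup F] [InnerProductSpace ℂ F] [CompleteSpace F]
    (Hn : ℕ → Type*) [∀ n, NormedAddCommGroup (Hn n)]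
    [∀ n, InnerProductSpace ℂ (Hn n)] [∀ n, CompleteSpace (Hn n)]
    (tp : ∀ n, TensorPowerStructure H (Hn n) n)
    (J : ∀ n, Hn n →ₗᵢ[ℂ] F)
    (horth : ∀ n m, n ≠ m → ∀ (x : Hn n) (y : Hn m), ⟪J n x, J m y⟫_ℂ = 0)
    (hdense : Dense ((Submodule.span ℂ
      (⋃ n : ℕ, Set.range (J n)) : Submodule ℂ F) : Set F))
    (T : H →L[ℂ] H) (hT : ‖T‖ < 1)
    (Tn : ∀ n, Hn n →L[ℂ] Hn n) (hTn : ∀ n, IsTensorPowerOp (tp n) T (Tn n))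
    (G : F →L[ℂ] F) (hG : ∀ (n : ℕ) (x : Hn n), G (J n x) = J n (Tn n x)) :
    spectrum ℂ G = {1} ∪ closure (⋃ n : ℕ,
      {z : ℂ | ∃ l : Fin (n + 1) → ℂ,
        (∀ j, l j ∈ spectrum ℂ T) ∧ z = ∏ j, l j}) := by
  have hJ : OrthogonalFamily ℂ Hn J := fun n m hnm => horth n m hnm
  have Tn_eq (n : ℕ) : Tn n = (tp n).map fun _ => T := (tp n).eq_map_of_isTensorPowerOp (hTn n)
  have norm_Tn_tendsto : Filter.Tendsto (fun n => ‖Tn n‖) Filter.cofinite (nhds 0) := by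
    rw [Nat.cofinite_eq_atTop]
    refine squeeze_zero (fun n => norm_nonneg _) (fun n => ?_)
      (tendsto_pow_atTop_nhds_zero_of_lt_one (norm_nonneg T) hT)
    simpa [Tn_eq n] using (tp n).norm_map_le fun _ => T
  have spectrum_Tn (n : ℕ) : spectrum ℂ (Tn n) =
      {z | ∃ l : Fin n → ℂ, (∀ j, l j ∈ spectrum ℂ T) ∧ z = ∏ j, l j} := by
    rw [Tn_eq n, (tp n).spectrum_map]
  have spectrum_Tn_zero : spectrum ℂ (Tn 0) = {1} := by simp [spectrum_Tn]
  have (n : ℕ) : Nontrivial (Hn n) := (tp n).nontrivial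
  rw [spectrum_hilbertSum_eq_closure_iUnion hJ hdense hG norm_Tn_tendsto,
    ← Set.union_iUnion_nat_succ, closure_union, spectrum_Tn_zero, closure_singleton]
  simp only [spectrum_Tn]
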